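/- Fix n ≥ 1. Let (G_m)_{m∈ℕ} be graphs on finite nonempty vertex sets V_m with edge relations E_m such that each G_m is n-saturated, and let each p_m : V_{m+1} → V_m be a quotient map of graphs satisfying the lifting property: for every q < n, whenever v, v₁, …, v_q ∈ V_m are such that each v_r is adjacent to v in G_m, and w₁, …, w_q ∈ V_{m+1} satisfy p_m(w_r) = v_r for all r, there exists w ∈ V_{m+1} with p_m(w) = v adjacent in G_{m+1} to every w_r. Then the inverse limit graph G = (L, E), where L = {a ∈ Π_m V_m : ∀ m, a(m) = p_m(a(m+1))} and E(a,b) ⟺ ∀ m, E_m(a(m), b(m)), is n-saturated. -/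

import Mathlib

/-- `n`-saturation of a graph given by the edge relation `E`. -/
def IsNSaturated {V : Type*} (E : V → V → Prop) (n : ℕ) : Prop :=
  ∀ A : Finset V, A.card < n → ∀ f : V → Bool,
    ∃ x, x ∉ A ∧ ∀ a ∈ A, (E a x ↔ f a = true)

/-- The vertex set of the inverse limit of the system `(V_m, p_m)`: the set of coherent
sequences in `Π m, V m`. -/
abbrev InvLimVerts (V : ℕ → Type*) (p : ∀ m, V (m + 1) → V m) : Type _ :=
  {a : ∀ m, V m // ∀ m, a m = p m (a (m + 1))}

/-- The edge relation of the inverse limit graph: two coherent sequences are adjacent iff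
they are adjacent coordinatewise. -/
def InvLimEdge {V : ℕ → Type*} {p : ∀ m, V (m + 1) → V m}
    (E : ∀ m, V m → V m → Prop) (a b : InvLimVerts V p) : Prop :=
  ∀ m, E m (a.1 m) (b.1 m)

/-- A quotient map of graphs: a surjective strict homomorphism. A homomorphism `h` is
strict if every edge of the target between vertices in the range of `h` is the image of
an edge of the source. -/
def IsGraphQuotientMap {V W : Type*} (E : V → V → Prop) (E' : W → W → Prop)
    (h : V → W) : Prop :=
  Function.Surjective h ∧ (∀ a b, E a b → E' (h a) (h b)) ∧
    ∀ u v, E' u v → u ∈ Set.range h → v ∈ Set.range h →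
      ∃ a b, E a b ∧ h a = u ∧ h b = v

/-!
Finitely many vertices of the inverse limit are already distinct at some level `m`, so saturation of
`G_m` provides a vertex `v` of `G_m` with the prescribed adjacencies there. A non-adjacency at level
`m` is inherited by every thread through `v`. For the adjacencies, let `B` be the set of vertices to
be joined, and let `N_k ⊆ V_k` be the set of common neighbours of the `k`-th coordinates of `B`.
Since the `p_k` are homomorphisms they restrict to maps `N_{k+1} → N_k`, and the lifting property
says that these restrictions are surjective; so some thread in the `N_k` passes through `v`.
-/

open Filter

/-- The lifting property of a map `h : W → V` between graphs, in terms of finite sets of vertices of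
`W` rather than tuples: a common neighbour in `V` of the images of fewer than `n` vertices of `W`
lifts to a common neighbour of these vertices. -/
def LiftsCommonNeighbors {V W : Type*} (E : W → W → Prop) (E' : V → V → Prop) (h : W → V)
    (n : ℕ) : Prop :=
  ∀ S : Finset W, S.card < n → ∀ v, (∀ s ∈ S, E' (h s) v) → ∃ w, h w = v ∧ ∀ s ∈ S, E s w

theorem LiftsCommonNeighbors.of_fin {V W : Type*} {E : W → W → Prop} {E' : V → V → Prop}
    {h : W → V} {n : ℕ}
    (hlift : ∀ q < n, ∀ (v : V) (vs : Fin q → V), (∀ r, E' (vs r) v) →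
      ∀ ws : Fin q → W, (∀ r, h (ws r) = vs r) → ∃ w, h w = v ∧ ∀ r, E (ws r) w) :
    LiftsCommonNeighbors E E' h n := by
  intro S hS v hv
  let e := S.equivFin
  obtain ⟨w, hw, hadj⟩ := hlift S.card hS v (fun r => h (e.symm r)) (fun r => hv _ (e.symm r).2)
    (fun r => e.symm r) fun _ => rfl
  exact ⟨w, hw, fun s hs => by simpa using hadj (e ⟨s, hs⟩)⟩

theorem IsNSaturated.exists_of_injOn {ι V : Type*} {E : V → V → Prop} {n : ℕ}
    (hE : IsNSaturated E n) {A : Finset ι} (hA : A.card < n) {g : ι → V} (hg : Set.InjOn g A)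
    (f : ι → Bool) : ∃ v, ∀ a ∈ A, g a ≠ v ∧ (E (g a) v ↔ f a = true) := by
  classical
  obtain ⟨v, hvA, hv⟩ := hE (A.image g) (Finset.card_image_le.trans_lt hA)
    fun u => decide (∃ a ∈ A, g a = u ∧ f a = true)
  refine ⟨v, fun a ha => ⟨fun h => hvA (h ▸ Finset.mem_image_of_mem g ha), ?_⟩⟩
  rw [hv _ (Finset.mem_image_of_mem g ha), decide_eq_true_iff]
  constructor
  · rintro ⟨b, hb, hba, hfb⟩
    rwa [← hg hb ha hba]
  · exact fun hfa => ⟨a, ha, rfl, hfa⟩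

section InverseLimit

variable {V : ℕ → Type*} {p : ∀ m, V (m + 1) → V m}

namespace InvLimVerts

theorem eval_eq_of_le {a b : InvLimVerts V p} {j k : ℕ} (hjk : j ≤ k)
    (h : a.1 k = b.1 k) : a.1 j = b.1 j := by
  induction k, hjk using Nat.le_induction with
  | base => exact h
  | succ k _ ih => exact ih (by rw [a.2 k, b.2 k, h])

theorem eventually_eval_ne {a b : InvLimVerts V p} (hab : a ≠ b) :
    ∀ᶠ m in atTop, a.1 m ≠ b.1 m := by
  obtain ⟨j, hj⟩ : ∃ j, a.1 j ≠ b.1 j := Function.ne_iff.1 (Subtype.coe_injective.ne hab)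
  filter_upwards [eventually_ge_atTop j] with m hjm h
  exact hj (eval_eq_of_le hjm h)

theorem eventually_injOn_eval {A : Set (InvLimVerts V p)} (hA : A.Finite) :
    ∀ᶠ m in atTop, Set.InjOn (fun a : InvLimVerts V p => a.1 m) A := by
  simp only [Set.InjOn, hA.eventually_all]
  intro a _ b _
  rcases eq_or_ne a b with rfl | hab
  · exact Eventually.of_forall fun _ _ => rfl
  · exact (eventually_eval_ne hab).mono fun _ hne h => absurd h hne

theorem eval_surjective (hp : ∀ m, Function.Surjective (p m)) (m : ℕ) :
    Function.Surjective fun x : InvLimVerts V p => x.1 m := by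
  induction m generalizing V p with
  | zero =>
    intro v
    choose s hs using hp
    exact ⟨⟨Nat.rec v s, fun k => (hs k _).symm⟩, rfl⟩
  | succ m ih =>
    intro v
    obtain ⟨x, hx⟩ := ih (fun k => hp (k + 1)) v
    exact ⟨⟨fun | 0 => p 0 (x.1 0) | k + 1 => x.1 k, fun | 0 => rfl | k + 1 => x.2 k⟩, hx⟩

end InvLimVerts

variable {E : ∀ m, V m → V m → Prop} {n : ℕ}

theorem InvLimEdge.exists_eval_eq (hhom : ∀ m a b, E (m + 1) a b → E m (p m a) (p m b))
    (hlift : ∀ m, LiftsCommonNeighbors (E (m + 1)) (E m) (p m) n)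
    {B : Finset (InvLimVerts V p)} (hB : B.card < n) {m : ℕ} {v : V m}
    (hv : ∀ a ∈ B, E m (a.1 m) v) :
    ∃ x : InvLimVerts V p, x.1 m = v ∧ ∀ a ∈ B, InvLimEdge E a x := by
  classical
  let N k := {y : V k // ∀ a ∈ B, E k (a.1 k) y}
  let pN k (y : N (k + 1)) : N k :=
    ⟨p k y.1, fun a ha => a.2 k ▸ hhom k _ _ (y.2 a ha)⟩
  have pN_surjective : ∀ k, Function.Surjective (pN k) := by
    rintro k ⟨y, hy⟩
    obtain ⟨w, hw, hadj⟩ := hlift k (B.image fun a => a.1 (k + 1))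
      (Finset.card_image_le.trans_lt hB) y
      (Finset.forall_mem_image.2 fun a ha => a.2 k ▸ hy a ha)
    exact ⟨⟨w, Finset.forall_mem_image.1 hadj⟩, Subtype.ext hw⟩
  obtain ⟨x, hx⟩ := InvLimVerts.eval_surjective pN_surjective m ⟨v, hv⟩
  exact ⟨⟨fun k => (x.1 k).1, fun k => congrArg Subtype.val (x.2 k)⟩, congrArg Subtype.val hx,
    fun a ha k => (x.1 k).2 a ha⟩

theorem invLim_nSaturated_general (hsat : ∃ᶠ m in atTop, IsNSaturated (E m) n)
    (hhom : ∀ m a b, E (m + 1) a b → E m (p m a) (p m b))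
    (hlift : ∀ m, LiftsCommonNeighbors (E (m + 1)) (E m) (p m) n) :
    IsNSaturated (InvLimEdge (p := p) E) n := by
  intro A hA f
  obtain ⟨m, hm, hinj⟩ :=
    (hsat.and_eventually (InvLimVerts.eventually_injOn_eval A.finite_toSet)).exists
  obtain ⟨v, hv⟩ := hm.exists_of_injOn hA hinj f
  obtain ⟨x, rfl, hadj⟩ := InvLimEdge.exists_eval_eq hhom hlift
    (B := A.filter fun a => f a = true) ((A.card_filter_le _).trans_lt hA) (v := v) fun a ha =>
      (hv a (Finset.mem_filter.1 ha).1).2.2 (Finset.mem_filter.1 ha).2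
  exact ⟨x, fun hx => (hv x hx).1 rfl, fun a ha =>
    ⟨fun hax => (hv a ha).2.1 (hax m), fun hfa => hadj a (Finset.mem_filter.2 ⟨ha, hfa⟩)⟩⟩

end InverseLimit

/-- Fix `n ≥ 1`. Let `(G_m)` be `n`-saturated graphs on finite nonempty vertex sets and
let each bonding map `p_m : V_{m+1} → V_m` be a quotient map of graphs with the lifting
property: for every `q < n`, whenever `v, v₁, …, v_q ∈ V_m` with each `v_r` adjacent to
`v` in `G_m`, and `w₁, …, w_q ∈ V_{m+1}` satisfy `p_m (w_r) = v_r`, there is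
`w ∈ V_{m+1}` with `p_m w = v` adjacent in `G_{m+1}` to every `w_r`. Then the inverse
limit graph is `n`-saturated. -/
theorem invLim_nSaturated
    (n : ℕ) (hn : 1 ≤ n)
    (V : ℕ → Type*) [∀ m, Fintype (V m)] [∀ m, Nonempty (V m)]
    (E : ∀ m, V m → V m → Prop)
    (hsymm : ∀ m, Symmetric (E m)) (hrefl : ∀ m, Reflexive (E m))
    (hsat : ∀ m, IsNSaturated (E m) n)
    (p : ∀ m, V (m + 1) → V m)
    (hquot : ∀ m, IsGraphQuotientMap (E (m + 1)) (E m) (p m))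
    (hlift : ∀ m, ∀ q : ℕ, q < n → ∀ (v : V m) (vs : Fin q → V m),
      (∀ r, E m (vs r) v) → ∀ ws : Fin q → V (m + 1), (∀ r, p m (ws r) = vs r) →
        ∃ w : V (m + 1), p m w = v ∧ ∀ r, E (m + 1) (ws r) w) :
    IsNSaturated (InvLimEdge (p := p) E) n :=
  invLim_nSaturated_general (Frequently.of_forall hsat) (fun m => (hquot m).2.1)
    fun m => .of_fin (hlift m)
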